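/- The reflexive transitive closure of the Plotkin judgement approximates the Kahn judgement: for every description P over Σ and all states σ, σ', if ⟨P,σ⟩ →* ⟨skip,σ'⟩ then ⟨P,σ⟩ ⇓ σ'. -/

import Mathlib

/-!
Consistency of `t ++ q` involves the past `t` only through its final state: if `t` and `u` are
consistent traces ending in `s`, then `t ++ q` is consistent and ends in `s'` iff `u ++ q` is
(`append_mem_icTr_of_mem`). Hence the pasts witnessing the individual Plotkin steps, which need not
fit together, may all be replaced by one common past, and the traces of the actions performed
concatenate to a trace of `P` extending it (`PlotkinIter.exists_append`). This holds for every
past ending in `s`, for instance the singleton `[(s, s)]`.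
-/

def lskip {σ : Type*} : Set (List σ) := {[]}

def cat {σ : Type*} (P Q : Set (List σ)) : Set (List σ) :=
  {w | ∃ p ∈ P, ∃ q ∈ Q, w = p ++ q}

def ic {σ : Type*} : List (σ × σ) → Prop
  | [] => True
  | [_] => True
  | (_, b) :: (c, d) :: t => b = c ∧ ic ((c, d) :: t)

def Inconsistent {σ : Type*} : Set (List (σ × σ)) := {t | ¬ ic t}

def icTr {σ : Type*} (s : σ) : Set (List (σ × σ)) :=
  {t | ic t ∧ ∃ t' s', t = t' ++ [(s', s)]}

def Kahn {σ : Type*} (P : Set (List (σ × σ))) (s s' : σ) : Prop :=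
  ∃ t ∈ icTr s, ∃ t' ∈ icTr s', t' ∈ cat {t} P

def Actions {σ : Type*} (AO : Set (Set (List (σ × σ)))) : Set (Set (List (σ × σ))) :=
  insert lskip AO

def Plotkin {σ : Type*} (AO : Set (Set (List (σ × σ))))
    (P : Set (List (σ × σ))) (s : σ) (P' : Set (List (σ × σ))) (s' : σ) : Prop :=
  ∃ t ∈ icTr s, ∃ t' ∈ icTr s', ∃ Q ∈ Actions AO, cat Q P' ⊆ P ∧ {t'} ⊆ cat {t} Q

def PlotkinIter {σ : Type*} (AO : Set (Set (List (σ × σ)))) :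
    ℕ → Set (List (σ × σ)) → σ → Set (List (σ × σ)) → σ → Prop
  | 0, P, s, P', s' => P = P' ∧ s = s'
  | n + 1, P, s, P', s' =>
      ∃ P'' s'', Plotkin AO P s P'' s'' ∧ PlotkinIter AO n P'' s'' P' s'

def PlotkinStar {σ : Type*} (AO : Set (Set (List (σ × σ))))
    (P : Set (List (σ × σ))) (s : σ) (P' : Set (List (σ × σ))) (s' : σ) : Prop :=
  ∃ n, PlotkinIter AO n P s P' s'

theorem ic_iff_isChain {σ : Type*} (t : List (σ × σ)) :
    ic t ↔ t.IsChain (fun a b => a.2 = b.1) := by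
  induction t with
  | nil => simp [ic]
  | cons a t ih =>
    cases t with
    | nil => simp [ic]
    | cons b t => simp [ic, ih]

theorem mem_icTr_iff {σ : Type*} (s : σ) (t : List (σ × σ)) :
    t ∈ icTr s ↔ t.IsChain (fun a b => a.2 = b.1) ∧ t.getLast?.map Prod.snd = some s := by
  simp only [icTr, Set.mem_ofPred_eq, ic_iff_isChain, Option.map_eq_some_iff,
    List.getLast?_eq_some_iff, Prod.exists]
  grind

/-- Whether a continuation is consistent, and its final state, depend on the past only through
the past's final state. -/
theorem append_mem_icTr_of_mem {σ : Type*} {s s' : σ} {t u q : List (σ × σ)}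
    (ht : t ∈ icTr s) (hu : u ∈ icTr s) (h : t ++ q ∈ icTr s') : u ++ q ∈ icTr s' := by
  rw [mem_icTr_iff] at *
  obtain ⟨-, ht⟩ := ht
  obtain ⟨huc, hu⟩ := hu
  rw [List.isChain_append, List.getLast?_append] at *
  obtain ⟨⟨-, hq, hj⟩, hl⟩ := h
  obtain ⟨a, ha, rfl⟩ := Option.map_eq_some_iff.1 ht
  obtain ⟨b, hb, hba⟩ := Option.map_eq_some_iff.1 hu
  refine ⟨⟨huc, hq, fun x hx y hy => ?_⟩, ?_⟩
  · obtain rfl : b = x := by simpa [hb] using hx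
    exact hba.trans (hj a ha y hy)
  · cases hq' : q.getLast? <;> simp_all

/-- The induction is uniform in the past `u`, so that the trace of the first step can be absorbed
into the past for the remaining ones. -/
theorem PlotkinIter.exists_append {σ : Type*} {AO : Set (Set (List (σ × σ)))} {n : ℕ}
    {P : Set (List (σ × σ))} {s s' : σ} (h : PlotkinIter AO n P s lskip s')
    {u : List (σ × σ)} (hu : u ∈ icTr s) : ∃ p ∈ P, u ++ p ∈ icTr s' := by
  induction n generalizing P s u with
  | zero =>
    obtain ⟨rfl, rfl⟩ := h
    exact ⟨[], rfl, by simpa using hu⟩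
  | succ n ih =>
    obtain ⟨P', s₁, ⟨t, ht, t', ht', Q, -, hQP, htQ⟩, hrest⟩ := h
    obtain ⟨_, rfl, q, hq, rfl⟩ := htQ rfl
    obtain ⟨p, hp, hup⟩ := ih hrest (append_mem_icTr_of_mem ht hu ht')
    exact ⟨q ++ p, hQP ⟨q, hq, p, hp, rfl⟩, by rwa [← List.append_assoc]⟩

theorem plotkin_star_approximates_kahn {σ : Type*}
    (AO : Set (Set (List (σ × σ)))) (hAO : ∀ a ∈ AO, ∀ t ∈ a, t.length = 1)
    (P : Set (List (σ × σ))) (s s' : σ)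
    (h : PlotkinStar AO P s lskip s') :
    Kahn P s s' := by
  obtain ⟨n, hn⟩ := h
  have hs : [(s, s)] ∈ icTr s := ⟨trivial, [], s, rfl⟩
  obtain ⟨p, hp, hsp⟩ := PlotkinIter.exists_append hn hs
  exact ⟨_, hs, _, hsp, _, rfl, p, hp, rfl⟩
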